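/- For a tuple $a=(a_1,\dots,a_k)$ of positive integers let $$P_A(a)=\prod_{1\le i<j\le k+1}\frac{a_i+a_{i+1}+\cdots+a_{j-1}}{j-i},$$ the dimension of the irreducible representation of $\mathrm{SL}_{k+1}(\mathbb{C})$ with highest weight $\sum_i (a_i-1)\omega_i$, where $\omega_1,\dots,\omega_k$ are the fundamental weights; call $a$ nontrivial if some $a_i\ge 2$. Let $N$ be a positive integer and let $k\ge 7$ be an integer with $k^2\ge N$. Then there are at most $7$ tuples $a$ of positive integers of length $k$ with $P_A(a)\le N$, and fewer than $7$ of them are nontrivial. -/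

import Mathlib

/-- The Weyl dimension of the irreducible representation of `SL_{k+1}(ℂ)` indexed by a tuple
`a` of length `k`, written with 0-based indices: the product over `0 ≤ i < j ≤ k` of
`(a_i + ⋯ + a_{j-1}) / (j - i)`. The index `t` below always satisfies `t < k`. -/
def PA (k : ℕ) (a : Fin k → ℕ) : ℚ :=
  ∏ i ∈ Finset.range (k + 1), ∏ j ∈ Finset.range (k + 1),
    if i < j then
      ((∑ t ∈ Finset.Ico i j, if h : t < k then (a ⟨t, h⟩ : ℚ) else 0) / ((j : ℚ) - (i : ℚ)))
    else 1

/-- The factor `(x_i + ⋯ + x_{j-1}) / (j - i)` of the Weyl dimension formula. -/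
def weylFactor (x : ℕ → ℕ) (i j : ℕ) : ℚ :=
  ((∑ t ∈ Finset.Ico i j, x t : ℕ) : ℚ) / ((j : ℚ) - (i : ℚ))

/-- The Weyl dimension of the first `k` entries of a sequence. -/
def weylDim (k : ℕ) (x : ℕ → ℕ) : ℚ :=
  ∏ i ∈ Finset.range (k + 1), ∏ j ∈ Finset.range (k + 1),
    if i < j then weylFactor x i j else 1

/-- The product of the factors of the Weyl dimension formula with left end `i`. -/
def weylRow (k : ℕ) (x : ℕ → ℕ) (i : ℕ) : ℚ :=
  ∏ j ∈ Finset.Ico (i + 1) (k + 1), weylFactor x i j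

/-- A tuple continued by ones. -/
def extendOne {k : ℕ} (a : Fin k → ℕ) (t : ℕ) : ℕ := if h : t < k then a ⟨t, h⟩ else 1

lemma PA_eq_weylDim {k : ℕ} (a : Fin k → ℕ) : PA k a = weylDim k (extendOne a) := by
  unfold PA weylDim
  refine Finset.prod_congr rfl fun i _ => Finset.prod_congr rfl fun j hj => ?_
  split_ifs with hij
  · unfold weylFactor
    congr 1
    push_cast
    refine Finset.sum_congr rfl fun t ht => ?_
    have h1 := Finset.mem_range.1 hj
    have h2 := (Finset.mem_Ico.1 ht).2
    have h3 : t < k := by omega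
    simp [extendOne, h3]
  · rfl

lemma weylDim_eq_prod_weylRow (k : ℕ) (x : ℕ → ℕ) :
    weylDim k x = ∏ i ∈ Finset.range (k + 1), weylRow k x i := by
  unfold weylDim weylRow
  refine Finset.prod_congr rfl fun i _ => ?_
  rw [← Finset.prod_filter]
  refine Finset.prod_congr ?_ fun _ _ => rfl
  ext j
  simp only [Finset.mem_filter, Finset.mem_range, Finset.mem_Ico]
  omega

lemma weylFactor_reverse {k i j : ℕ} (x : ℕ → ℕ) (hij : i < j) (hj : j ≤ k) :
    weylFactor (fun t => x (k - 1 - t)) i j = weylFactor x (k - j) (k - i) := by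
  unfold weylFactor
  have h := Finset.sum_Ico_reflect x i (show j ≤ (k - 1) + 1 by omega)
  rw [show k - 1 + 1 - j = k - j by omega, show k - 1 + 1 - i = k - i by omega] at h
  rw [h]
  congr 1
  rw [Nat.cast_sub hj, Nat.cast_sub (hij.le.trans hj)]
  ring

lemma weylDim_reverse (k : ℕ) (x : ℕ → ℕ) :
    weylDim k (fun t => x (k - 1 - t)) = weylDim k x := by
  unfold weylDim
  rw [Finset.prod_comm]
  conv_rhs =>
    rw [← Finset.prod_range_reflect]
  refine Finset.prod_congr rfl fun j hj => ?_
  conv_rhs =>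
    rw [← Finset.prod_range_reflect]
  refine Finset.prod_congr rfl fun i hi => ?_
  have h1 := Finset.mem_range.1 hj
  have h2 := Finset.mem_range.1 hi
  by_cases hij : i < j
  · rw [if_pos hij, if_pos (by omega), weylFactor_reverse x hij (by omega)]
    congr 1
  · rw [if_neg hij, if_neg (by omega)]

lemma sum_Ico_ge {x : ℕ → ℕ} (hx : ∀ t, 1 ≤ x t) {i j : ℕ} (s : Finset ℕ)
    (hs : s ⊆ Finset.Ico i j) :
    (j - i) + ∑ t ∈ s, (x t - 1) ≤ ∑ t ∈ Finset.Ico i j, x t := by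
  calc (j - i) + ∑ t ∈ s, (x t - 1)
      ≤ ∑ _t ∈ Finset.Ico i j, 1 + ∑ t ∈ Finset.Ico i j, (x t - 1) := by
        gcongr
        simp
    _ = ∑ t ∈ Finset.Ico i j, x t := by
        rw [← Finset.sum_add_distrib]
        exact Finset.sum_congr rfl fun t _ => by have := hx t; omega

lemma le_weylFactor {x : ℕ → ℕ} (hx : ∀ t, 1 ≤ x t) {i j c : ℕ} (hij : i < j) (s : Finset ℕ)
    (hs : s ⊆ Finset.Ico i j) (hc : c ≤ ∑ t ∈ s, (x t - 1)) :
    ((j : ℚ) - i + c) / ((j : ℚ) - i) ≤ weylFactor x i j := by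
  unfold weylFactor
  have hpos : (0 : ℚ) < (j : ℚ) - i := sub_pos.2 (by exact_mod_cast hij)
  have h : (j - i) + c ≤ ∑ t ∈ Finset.Ico i j, x t :=
    (Nat.add_le_add_left hc _).trans (sum_Ico_ge hx s hs)
  have h' : ((j : ℚ) - i + c) ≤ ((∑ t ∈ Finset.Ico i j, x t : ℕ) : ℚ) := by
    rw [← Nat.cast_sub hij.le]
    exact_mod_cast h
  exact div_le_div_of_nonneg_right h' hpos.le

lemma one_le_weylFactor {x : ℕ → ℕ} (hx : ∀ t, 1 ≤ x t) {i j : ℕ} (hij : i < j) :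
    1 ≤ weylFactor x i j := by
  have hpos : (0 : ℚ) < (j : ℚ) - i := sub_pos.2 (by exact_mod_cast hij)
  have h := le_weylFactor hx (c := 0) hij ∅ (by simp) (by simp)
  rwa [Nat.cast_zero, add_zero, div_self hpos.ne'] at h

lemma le_weylFactor_single {x : ℕ → ℕ} (hx : ∀ t, 1 ≤ x t) {i j m c : ℕ} (him : i ≤ m)
    (hmj : m < j) (hc : c + 1 ≤ x m) :
    ((j : ℚ) - i + c) / ((j : ℚ) - i) ≤ weylFactor x i j := by
  refine le_weylFactor hx (by omega) {m} ?_ ?_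
  · simp; omega
  · simp; omega

lemma le_weylFactor_pair {x : ℕ → ℕ} (hx : ∀ t, 1 ≤ x t) {i j p m : ℕ} (hip : i ≤ p)
    (hpm : p < m) (hmj : m < j) (hp : 2 ≤ x p) (hm : 2 ≤ x m) :
    ((j : ℚ) - i + 2) / ((j : ℚ) - i) ≤ weylFactor x i j := by
  have := le_weylFactor hx (c := 2) (show i < j by omega) {p, m} ?_ ?_
  · exact_mod_cast this
  · intro t
    simp only [Finset.mem_insert, Finset.mem_singleton, Finset.mem_Ico]
    omega
  · rw [Finset.sum_pair hpm.ne]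
    omega

lemma one_le_prod_of_one_le {ι : Type*} {s : Finset ι} {f : ι → ℚ} (h : ∀ i ∈ s, 1 ≤ f i) :
    1 ≤ ∏ i ∈ s, f i := by
  calc (1 : ℚ) = ∏ _i ∈ s, 1 := by simp
    _ ≤ ∏ i ∈ s, f i := Finset.prod_le_prod (fun _ _ => zero_le_one) h

lemma prod_le_prod_of_subset_of_one_le {s t : Finset ℕ} {f : ℕ → ℚ} (hst : s ⊆ t)
    (h : ∀ i ∈ t, 1 ≤ f i) : ∏ i ∈ s, f i ≤ ∏ i ∈ t, f i := by
  rw [← Finset.prod_sdiff hst]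
  refine le_mul_of_one_le_left
    (zero_le_one.trans (one_le_prod_of_one_le fun i hi => h i (hst hi))) ?_
  exact one_le_prod_of_one_le fun i hi => h i (Finset.mem_sdiff.1 hi).1

lemma prod_Ico_telescope_one {i m n : ℕ} (him : i ≤ m) (hmn : m + 1 ≤ n) :
    ∏ j ∈ Finset.Ico (m + 1) n, (((j : ℚ) - i + 1) / ((j : ℚ) - i)) =
      ((n : ℚ) - i) / ((m : ℚ) + 1 - i) := by
  have him' : (i : ℚ) ≤ m := by exact_mod_cast him
  have h0 : (m : ℚ) + 1 - i ≠ 0 := by linarith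
  induction n, hmn using Nat.le_induction with
  | base => simp [div_self h0]
  | succ n hn ih =>
    have hn' : (m : ℚ) + 1 ≤ n := by exact_mod_cast hn
    have h1 : (n : ℚ) - i ≠ 0 := by linarith
    rw [Finset.prod_Ico_succ_top hn, ih]
    push_cast
    field_simp
    ring

lemma prod_Ico_telescope_two {i m n : ℕ} (him : i ≤ m) (hmn : m + 1 ≤ n) :
    ∏ j ∈ Finset.Ico (m + 1) n, (((j : ℚ) - i + 2) / ((j : ℚ) - i)) =
      ((n : ℚ) - i) * ((n : ℚ) + 1 - i) / (((m : ℚ) + 1 - i) * ((m : ℚ) + 2 - i)) := by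
  have him' : (i : ℚ) ≤ m := by exact_mod_cast him
  have h0 : (m : ℚ) + 1 - i ≠ 0 := by linarith
  have h2 : (m : ℚ) + 2 - i ≠ 0 := by linarith
  induction n, hmn using Nat.le_induction with
  | base =>
    push_cast
    rw [Finset.Ico_self, Finset.prod_empty, eq_comm, div_eq_one_iff_eq (mul_ne_zero h0 h2)]
    ring
  | succ n hn ih =>
    have hn' : (m : ℚ) + 1 ≤ n := by exact_mod_cast hn
    have h1 : (n : ℚ) - i ≠ 0 := by linarith
    rw [Finset.prod_Ico_succ_top hn, ih]
    push_cast
    field_simp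
    ring

lemma prod_Ico_one_telescope_three (n : ℕ) :
    ∏ j ∈ Finset.Ico 1 (n + 1), (((j : ℚ) + 3) / (j : ℚ)) =
      ((n : ℚ) + 1) * ((n : ℚ) + 2) * ((n : ℚ) + 3) / 6 := by
  induction n with
  | zero => norm_num
  | succ n ih =>
    rw [Finset.prod_Ico_succ_top (by omega), ih]
    have h1 : (n : ℚ) + 1 ≠ 0 := by positivity
    push_cast
    field_simp
    ring

section Rows

variable {k : ℕ} {x : ℕ → ℕ}

lemma one_le_weylRow (hx : ∀ t, 1 ≤ x t) (i : ℕ) : 1 ≤ weylRow k x i :=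
  one_le_prod_of_one_le fun j hj => one_le_weylFactor hx (by
    have := (Finset.mem_Ico.1 hj).1
    omega)

lemma prod_weylRow_le_weylDim (hx : ∀ t, 1 ≤ x t) {s : Finset ℕ}
    (hs : s ⊆ Finset.range (k + 1)) : ∏ i ∈ s, weylRow k x i ≤ weylDim k x := by
  rw [weylDim_eq_prod_weylRow]
  exact prod_le_prod_of_subset_of_one_le hs fun i _ => one_le_weylRow hx i

lemma prod_weylFactor_le_weylRow (hx : ∀ t, 1 ≤ x t) {i m : ℕ} (him : i ≤ m) :
    ∏ j ∈ Finset.Ico (m + 1) (k + 1), weylFactor x i j ≤ weylRow k x i := by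
  refine prod_le_prod_of_subset_of_one_le (Finset.Ico_subset_Ico (by omega) le_rfl) fun j hj => ?_
  have := (Finset.mem_Ico.1 hj).1
  exact one_le_weylFactor hx (by omega)

lemma div_sub_nonneg {i j c : ℕ} (hij : i < j) : 0 ≤ ((j : ℚ) - i + c) / ((j : ℚ) - i) := by
  have hpos : (0 : ℚ) < (j : ℚ) - i := sub_pos.2 (by exact_mod_cast hij)
  positivity

lemma prod_le_weylRow (hx : ∀ t, 1 ≤ x t) {i m c : ℕ} (him : i ≤ m) (hc : c + 1 ≤ x m) :
    ∏ j ∈ Finset.Ico (m + 1) (k + 1), (((j : ℚ) - i + c) / ((j : ℚ) - i)) ≤ weylRow k x i := by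
  refine le_trans (Finset.prod_le_prod (fun j hj => ?_) fun j hj => ?_)
    (prod_weylFactor_le_weylRow hx him)
  · have := (Finset.mem_Ico.1 hj).1
    exact div_sub_nonneg (by omega)
  · have := (Finset.mem_Ico.1 hj).1
    exact le_weylFactor_single hx him (by omega) hc

lemma le_weylRow_of_two_le (hx : ∀ t, 1 ≤ x t) {i m : ℕ} (him : i ≤ m) (hmk : m < k)
    (hm : 2 ≤ x m) : ((k : ℚ) + 1 - i) / ((m : ℚ) + 1 - i) ≤ weylRow k x i := by
  have h := prod_le_weylRow (k := k) hx (c := 1) him hm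
  rw [Nat.cast_one, prod_Ico_telescope_one him (by omega)] at h
  exact_mod_cast h

lemma le_weylRow_of_three_le (hx : ∀ t, 1 ≤ x t) {i m : ℕ} (him : i ≤ m) (hmk : m < k)
    (hm : 3 ≤ x m) :
    ((k : ℚ) + 1 - i) * ((k : ℚ) + 2 - i) / (((m : ℚ) + 1 - i) * ((m : ℚ) + 2 - i)) ≤
      weylRow k x i := by
  have h := prod_le_weylRow (k := k) hx (c := 2) him hm
  rw [Nat.cast_ofNat, prod_Ico_telescope_two him (by omega)] at h
  convert h using 3 <;> push_cast <;> ring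

lemma le_weylRow_zero_of_four_le (hx : ∀ t, 1 ≤ x t) (h0 : 4 ≤ x 0) :
    ((k : ℚ) + 1) * ((k : ℚ) + 2) * ((k : ℚ) + 3) / 6 ≤ weylRow k x 0 := by
  have h := prod_le_weylRow (k := k) hx (c := 3) le_rfl h0
  rw [← prod_Ico_one_telescope_three]
  simpa using h

lemma le_weylRow_of_pair (hx : ∀ t, 1 ≤ x t) {p m : ℕ} (hpm : p < m) (hmk : m < k)
    (hp : 2 ≤ x p) (hm : 2 ≤ x m) :
    ((k : ℚ) + 1 - p) * ((k : ℚ) + 2 - p) / ((m : ℚ) + 2 - p) ≤ weylRow k x p := by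
  have hpm' : (p : ℚ) < m := by exact_mod_cast hpm
  have h1 : ((m : ℚ) + 1 - p) ≤ ∏ j ∈ Finset.Ico (p + 1) (m + 1), weylFactor x p j := by
    have e := prod_Ico_telescope_one (le_refl p) (show p + 1 ≤ m + 1 by omega)
    push_cast at e
    rw [show (p : ℚ) + 1 - p = 1 by ring, div_one] at e
    rw [← e]
    refine Finset.prod_le_prod (fun j hj => ?_) fun j hj => ?_ <;>
      have hj := (Finset.mem_Ico.1 hj).1
    · exact_mod_cast div_sub_nonneg (c := 1) (show p < j by omega)
    · exact_mod_cast le_weylFactor_single hx (c := 1) le_rfl (show p < j by omega) hp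
  have h2 : ((k : ℚ) + 1 - p) * ((k : ℚ) + 2 - p) / (((m : ℚ) + 1 - p) * ((m : ℚ) + 2 - p)) ≤
      ∏ j ∈ Finset.Ico (m + 1) (k + 1), weylFactor x p j := by
    have e := prod_Ico_telescope_two hpm.le (show m + 1 ≤ k + 1 by omega)
    push_cast at e
    rw [show (k : ℚ) + 1 + 1 - p = k + 2 - p by ring] at e
    rw [← e]
    refine Finset.prod_le_prod (fun j hj => ?_) fun j hj => ?_ <;>
      have hj := (Finset.mem_Ico.1 hj).1
    · exact_mod_cast div_sub_nonneg (c := 2) (show p < j by omega)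
    · exact le_weylFactor_pair hx le_rfl hpm (by omega) hp hm
  have hmk' : (m : ℚ) < k := by exact_mod_cast hmk
  have hA : (0 : ℚ) < (m : ℚ) + 1 - p := by linarith
  have hB : (0 : ℚ) < (m : ℚ) + 2 - p := by linarith
  have hC : (0 : ℚ) < (k : ℚ) + 1 - p := by linarith
  have hD : (0 : ℚ) < (k : ℚ) + 2 - p := by linarith
  unfold weylRow
  rw [← Finset.prod_Ico_consecutive _ (show p + 1 ≤ m + 1 by omega)
    (show m + 1 ≤ k + 1 by omega)]
  refine le_trans (le_of_eq ?_) (mul_le_mul h1 h2 (by positivity) (hA.le.trans h1))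
  field_simp

lemma prod_div_le_prod_weylRow (hx : ∀ t, 1 ≤ x t) {p m : ℕ} (hmk : m < k) (hm : 2 ≤ x m) :
    ∏ i ∈ Finset.Ico p (m + 1), (((k : ℚ) + 1 - i) / ((m : ℚ) + 1 - i)) ≤
      ∏ i ∈ Finset.Ico p (m + 1), weylRow k x i := by
  refine Finset.prod_le_prod (fun i hi => ?_) fun i hi => ?_
  · have h1 : (i : ℚ) ≤ m := by exact_mod_cast Nat.lt_succ_iff.1 (Finset.mem_Ico.1 hi).2
    have h2 : (m : ℚ) < k := by exact_mod_cast hmk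
    exact div_nonneg (by linarith) (by linarith)
  · exact le_weylRow_of_two_le hx (Nat.lt_succ_iff.1 (Finset.mem_Ico.1 hi).2) hmk hm

lemma weylRow_mul_prod_le_weylDim (hx : ∀ t, 1 ≤ x t) {p m : ℕ} (hpm : p < m) (hmk : m < k)
    (hm : 2 ≤ x m) :
    weylRow k x p *
        ∏ i ∈ Finset.Ico (p + 1) (m + 1), (((k : ℚ) + 1 - i) / ((m : ℚ) + 1 - i)) ≤
      weylDim k x := by
  refine le_trans ?_ (prod_weylRow_le_weylDim hx (s := Finset.Ico p (m + 1)) fun i hi => ?_)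
  · rw [Finset.prod_eq_prod_Ico_succ_bot (show p < m + 1 by omega)]
    exact mul_le_mul_of_nonneg_left (prod_div_le_prod_weylRow hx hmk hm)
      (zero_le_one.trans (one_le_weylRow hx p))
  · have := (Finset.mem_Ico.1 hi).2
    exact Finset.mem_range.2 (by omega)

lemma weylRow_zero_mul_weylRow_one_le (hx : ∀ t, 1 ≤ x t) (hk : 1 ≤ k) :
    weylRow k x 0 * weylRow k x 1 ≤ weylDim k x := by
  have h := prod_weylRow_le_weylDim (k := k) hx (s := Finset.range 2) fun i hi => by
    have := Finset.mem_range.1 hi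
    exact Finset.mem_range.2 (by omega)
  simpa [Finset.prod_range_succ] using h

end Rows

lemma prod_range_div_eq_choose (n r : ℕ) (h : r ≤ n) :
    ∏ i ∈ Finset.range r, (((n : ℚ) - i) / ((r : ℚ) - i)) = (n.choose r : ℚ) := by
  have key : ∀ q : ℕ, r ≤ q → ∏ i ∈ Finset.range r, ((q : ℚ) - i) = (q.descFactorial r : ℚ) := by
    intro q hq
    rw [Nat.descFactorial_eq_prod_range, Nat.cast_prod]
    refine Finset.prod_congr rfl fun i hi => ?_
    rw [Nat.cast_sub ((Finset.mem_range.1 hi).le.trans hq)]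
  rw [Finset.prod_div_distrib, key n h, key r le_rfl, Nat.descFactorial_self,
    Nat.descFactorial_eq_factorial_mul_choose, Nat.cast_mul,
    mul_div_cancel_left₀ _ (by exact_mod_cast r.factorial_ne_zero)]

lemma choose_le_choose_of_le_half {n s r : ℕ} (hsr : s ≤ r) (hr : 2 * r ≤ n) :
    n.choose s ≤ n.choose r := by
  induction r, hsr using Nat.le_induction with
  | base => exact le_rfl
  | succ r _ ih =>
    exact (ih (by omega)).trans (Nat.choose_le_succ_of_lt_half_left (by omega))

lemma choose_three_le_choose {n r : ℕ} (h3 : 3 ≤ r) (hr : r + 3 ≤ n) :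
    n.choose 3 ≤ n.choose r := by
  rcases le_total (2 * r) n with h | h
  · exact choose_le_choose_of_le_half h3 h
  · rw [← Nat.choose_symm (show r ≤ n by omega)]
    exact choose_le_choose_of_le_half (by omega) (by omega)

lemma cast_choose_three (k : ℕ) :
    ((k + 1).choose 3 : ℚ) = ((k : ℚ) + 1) * k * ((k : ℚ) - 1) / 6 := by
  rcases Nat.lt_or_ge k 2 with h | h
  · interval_cases k <;> norm_num [Nat.choose]
  · rw [← prod_range_div_eq_choose _ _ (by omega)]
    simp [Finset.prod_range_succ]
    ring

lemma prod_Ico_telescope_shift_one {k p : ℕ} (hp : p ≤ k) :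
    ∏ i ∈ Finset.Ico p k, (((k : ℚ) + 1 - i) / ((k : ℚ) - i)) = (k : ℚ) + 1 - p := by
  have key : ∀ m, p ≤ m → m ≤ k →
      ∏ i ∈ Finset.Ico p m, (((k : ℚ) + 1 - i) / ((k : ℚ) - i)) =
        ((k : ℚ) + 1 - p) / ((k : ℚ) + 1 - m) := by
    intro m hm
    have hpk : (p : ℚ) ≤ k := by exact_mod_cast hp
    induction m, hm using Nat.le_induction with
    | base =>
      intro _
      rw [Finset.Ico_self, Finset.prod_empty, div_self (by linarith)]
    | succ m hm ih =>
      intro hmk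
      have hmk' : (m : ℚ) + 1 ≤ k := by exact_mod_cast hmk
      have h1 : (k : ℚ) - m ≠ 0 := by linarith
      have h2 : (k : ℚ) + 1 - m ≠ 0 := by linarith
      rw [Finset.prod_Ico_succ_top hm, ih (by omega)]
      push_cast
      rw [show (k : ℚ) + 1 - (m + 1) = k - m by ring]
      field_simp
  rw [key k hp le_rfl]
  simp

lemma prod_Ico_telescope_shift_two {k p : ℕ} (hp : p + 1 ≤ k) :
    ∏ i ∈ Finset.Ico p (k - 1), (((k : ℚ) + 1 - i) / ((k : ℚ) - 1 - i)) =
      ((k : ℚ) + 1 - p) * ((k : ℚ) - p) / 2 := by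
  obtain ⟨l, rfl⟩ : ∃ l, k = l + 1 := ⟨k - 1, by omega⟩
  have e : ∀ i ∈ Finset.Ico p l, ((((l + 1 : ℕ) : ℚ) + 1 - i) / (((l + 1 : ℕ) : ℚ) - 1 - i)) =
      ((((l + 1 : ℕ) : ℚ) + 1 - i) / (((l + 1 : ℕ) : ℚ) - i)) *
        (((l : ℚ) + 1 - i) / ((l : ℚ) - i)) := by
    intro i hi
    have hi' : (i : ℚ) + 1 ≤ l := by exact_mod_cast (Finset.mem_Ico.1 hi).2
    have h1 : (l : ℚ) - i ≠ 0 := by linarith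
    have h2 : (l : ℚ) + 1 - i ≠ 0 := by linarith
    push_cast
    rw [show (l : ℚ) + 1 - 1 - i = l - i by ring]
    field_simp
  have h := prod_Ico_telescope_shift_one (show p ≤ l + 1 by omega)
  rw [Finset.prod_Ico_succ_top (by omega)] at h
  push_cast at h
  rw [show (l : ℚ) + 1 - l = 1 by ring, show (l : ℚ) + 1 + 1 - l = 2 by ring, div_one] at h
  rw [Nat.add_sub_cancel, Finset.prod_congr rfl e, Finset.prod_mul_distrib,
    prod_Ico_telescope_shift_one (by omega)]
  push_cast
  rw [← h]
  ring

section Bounds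

variable {k : ℕ} {x : ℕ → ℕ}

lemma sq_lt_weylDim_of_middle (hx : ∀ t, 1 ≤ x t) (hk : 7 ≤ k) {m : ℕ} (h2 : 2 ≤ m)
    (hmk : m + 3 ≤ k) (hm : 2 ≤ x m) : (k : ℚ) ^ 2 < weylDim k x := by
  have hk' : (7 : ℚ) ≤ k := by exact_mod_cast hk
  have h1 := (prod_div_le_prod_weylRow (p := 0) hx (show m < k by omega) hm).trans
    (prod_weylRow_le_weylDim hx fun i hi => Finset.mem_range.2 (by
      have := (Finset.mem_Ico.1 hi).2
      omega))
  have h3 := prod_range_div_eq_choose (k + 1) (m + 1) (by omega)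
  push_cast at h3
  rw [← Finset.range_eq_Ico, h3] at h1
  have h4 : (((k + 1).choose 3 : ℕ) : ℚ) ≤ ((k + 1).choose (m + 1) : ℕ) := by
    exact_mod_cast choose_three_le_choose (by omega) (by omega)
  rw [cast_choose_three] at h4
  refine lt_of_lt_of_le ?_ (h4.trans h1)
  nlinarith [mul_nonneg (sub_nonneg.2 hk') (sub_nonneg.2 hk')]

lemma sq_lt_weylDim_of_four_le_zero (hx : ∀ t, 1 ≤ x t) (h0 : 4 ≤ x 0) :
    (k : ℚ) ^ 2 < weylDim k x := by
  have h1 := prod_weylRow_le_weylDim (k := k) hx (s := {0}) (by simp)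
  rw [Finset.prod_singleton] at h1
  refine lt_of_lt_of_le ?_ ((le_weylRow_zero_of_four_le hx h0).trans h1)
  have : (0 : ℚ) ≤ k := by positivity
  nlinarith [mul_nonneg this (sq_nonneg (k : ℚ)), sq_nonneg ((k : ℚ) - 1), pow_succ (k : ℚ) 2]

lemma sq_lt_weylDim_of_three_le_one (hx : ∀ t, 1 ≤ x t) (hk : 7 ≤ k) (h1 : 3 ≤ x 1) :
    (k : ℚ) ^ 2 < weylDim k x := by
  have hk' : (7 : ℚ) ≤ k := by exact_mod_cast hk
  have r0 := le_weylRow_of_three_le hx (show 0 ≤ 1 by omega) (show 1 < k by omega) h1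
  have r1 := le_weylRow_of_three_le hx (show 1 ≤ 1 by omega) (show 1 < k by omega) h1
  norm_num at r0 r1
  have r0' : (9 : ℚ) ≤ weylRow k x 0 := by nlinarith
  have r1' : (k : ℚ) ^ 2 / 2 < weylRow k x 1 := by nlinarith
  refine lt_of_lt_of_le ?_ (weylRow_zero_mul_weylRow_one_le hx (by omega))
  nlinarith

lemma sq_lt_weylDim_of_zero_one (hx : ∀ t, 1 ≤ x t) (hk : 7 ≤ k) (h0 : 2 ≤ x 0)
    (h1 : 2 ≤ x 1) : (k : ℚ) ^ 2 < weylDim k x := by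
  have hk' : (7 : ℚ) ≤ k := by exact_mod_cast hk
  have r0 := le_weylRow_of_pair hx zero_lt_one (show 1 < k by omega) h0 h1
  have r1 := le_weylRow_of_two_le hx (show 1 ≤ 1 by omega) (show 1 < k by omega) h1
  norm_num at r0 r1
  have r0' : (k : ℚ) < weylRow k x 0 := by nlinarith
  refine lt_of_lt_of_le ?_ (weylRow_zero_mul_weylRow_one_le hx (by omega))
  nlinarith

lemma sq_lt_weylDim_of_zero_last (hx : ∀ t, 1 ≤ x t) (hk : 7 ≤ k) (h0 : 2 ≤ x 0)
    (h1 : 2 ≤ x (k - 1)) : (k : ℚ) ^ 2 < weylDim k x := by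
  have hk' : (7 : ℚ) ≤ k := by exact_mod_cast hk
  have r0 := le_weylRow_of_pair hx (show 0 < k - 1 by omega) (show k - 1 < k by omega) h0 h1
  have h := weylRow_mul_prod_le_weylDim hx (show 0 < k - 1 by omega) (show k - 1 < k by omega) h1
  rw [Nat.sub_add_cancel (by omega), Nat.cast_sub (by omega)] at h
  rw [Nat.cast_sub (by omega)] at r0
  simp only [Nat.cast_one, sub_add_cancel] at h
  rw [prod_Ico_telescope_shift_one (by omega)] at h
  push_cast at h r0
  rw [show (k : ℚ) - 1 + 2 - 0 = k + 1 by ring, sub_zero, sub_zero,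
    mul_div_cancel_left₀ _ (by positivity)] at r0
  nlinarith

lemma sq_lt_weylDim_of_penultimate (hx : ∀ t, 1 ≤ x t) (hk : 7 ≤ k) {p : ℕ} (hp : p ≤ 1)
    (h0 : 2 ≤ x p) (h1 : 2 ≤ x (k - 2)) : (k : ℚ) ^ 2 < weylDim k x := by
  have hk' : (7 : ℚ) ≤ k := by exact_mod_cast hk
  have hp' : (p : ℚ) ≤ 1 := by exact_mod_cast hp
  have r0 := le_weylRow_of_pair hx (show p < k - 2 by omega) (show k - 2 < k by omega) h0 h1
  have h := weylRow_mul_prod_le_weylDim hx (show p < k - 2 by omega) (show k - 2 < k by omega) h1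
  rw [show k - 2 + 1 = k - 1 by omega, Nat.cast_sub (by omega)] at h
  rw [Nat.cast_sub (by omega)] at r0
  simp only [Nat.cast_ofNat, sub_add_cancel, show (k : ℚ) - 2 + 1 = k - 1 by ring] at h r0
  rw [prod_Ico_telescope_shift_two (by omega)] at h
  push_cast at h
  have r0' : (k : ℚ) < weylRow k x p := by
    refine lt_of_lt_of_le ?_ r0
    rw [lt_div_iff₀ (by linarith)]
    nlinarith
  have hq : (k : ℚ) ≤ ((k : ℚ) + 1 - (p + 1)) * ((k : ℚ) - (p + 1)) / 2 := by nlinarith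
  nlinarith

lemma eq_ite_of_ends (hk : 7 ≤ k) (mid : ∀ t, 2 ≤ t → t + 3 ≤ k → x t = 1) {m c : ℕ}
    (hm : m ≤ 1 ∨ k ≤ m + 2) (e0 : x 0 = if 0 = m then c + 1 else 1)
    (e1 : x 1 = if 1 = m then c + 1 else 1) (e2 : x (k - 1) = if k - 1 = m then c + 1 else 1)
    (e3 : x (k - 2) = if k - 2 = m then c + 1 else 1) :
    ∀ t < k, x t = if t = m then c + 1 else 1 := by
  intro t ht
  rcases (by omega : t = 0 ∨ t = 1 ∨ t = k - 1 ∨ t = k - 2 ∨ (2 ≤ t ∧ t + 3 ≤ k)) with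
    rfl | rfl | rfl | rfl | ht'
  · exact e0
  · exact e1
  · exact e2
  · exact e3
  · rw [mid t ht'.1 ht'.2, if_neg (by omega)]

lemma end_entries_cases {a b c d : ℕ} (ha : 1 ≤ a) (ha' : a < 4) (hb : 1 ≤ b) (hb' : b < 3)
    (hc : 1 ≤ c) (hc' : c < 4) (hd : 1 ≤ d) (hd' : d < 3) (hab : ¬ (2 ≤ a ∧ 2 ≤ b))
    (hcd : ¬ (2 ≤ c ∧ 2 ≤ d)) (hac : ¬ (2 ≤ a ∧ 2 ≤ c)) (had : ¬ (2 ≤ a ∧ 2 ≤ d))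
    (hbd : ¬ (2 ≤ b ∧ 2 ≤ d)) (hcb : ¬ (2 ≤ c ∧ 2 ≤ b)) :
    (a = 1 ∧ b = 1 ∧ c = 1 ∧ d = 1) ∨
      (a = 2 ∧ b = 1 ∧ c = 1 ∧ d = 1) ∨
      (a = 3 ∧ b = 1 ∧ c = 1 ∧ d = 1) ∨
      (a = 1 ∧ b = 2 ∧ c = 1 ∧ d = 1) ∨
      (a = 1 ∧ b = 1 ∧ c = 2 ∧ d = 1) ∨
      (a = 1 ∧ b = 1 ∧ c = 3 ∧ d = 1) ∨
      (a = 1 ∧ b = 1 ∧ c = 1 ∧ d = 2) := by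
  interval_cases a <;> interval_cases b <;> interval_cases c <;> interval_cases d <;> simp_all

lemma exists_weight_of_weylDim_le_sq (hx : ∀ t, 1 ≤ x t) (hk : 7 ≤ k)
    (h : weylDim k x ≤ (k : ℚ) ^ 2) :
    ∃ w ∈ [(0, 0), (0, 1), (0, 2), (1, 1), (k - 1, 1), (k - 1, 2), (k - 2, 1)],
      ∀ t < k, x t = if t = w.1 then w.2 + 1 else 1 := by
  have hy : ∀ t, 1 ≤ (fun t => x (k - 1 - t)) t := fun t => hx _
  have h' : weylDim k (fun t => x (k - 1 - t)) ≤ (k : ℚ) ^ 2 := by rwa [weylDim_reverse]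
  have mid : ∀ t, 2 ≤ t → t + 3 ≤ k → x t = 1 := fun t h2 h3 => by
    by_contra hne
    exact h.not_gt (sq_lt_weylDim_of_middle hx hk h2 h3 (by have := hx t; omega))
  have a0 : x 0 < 4 := not_le.1 fun c => h.not_gt (sq_lt_weylDim_of_four_le_zero hx c)
  have a1 : x 1 < 3 := not_le.1 fun c => h.not_gt (sq_lt_weylDim_of_three_le_one hx hk c)
  have b0 : x (k - 1) < 4 := not_le.1 fun c => h'.not_gt (sq_lt_weylDim_of_four_le_zero hy c)
  have b1 : x (k - 2) < 3 := not_le.1 fun c => h'.not_gt (sq_lt_weylDim_of_three_le_one hy hk c)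
  have c1 : ¬ (2 ≤ x 0 ∧ 2 ≤ x 1) := fun c =>
    h.not_gt (sq_lt_weylDim_of_zero_one hx hk c.1 c.2)
  have c2 : ¬ (2 ≤ x (k - 1) ∧ 2 ≤ x (k - 2)) := fun c =>
    h'.not_gt (sq_lt_weylDim_of_zero_one hy hk c.1 c.2)
  have c3 : ¬ (2 ≤ x 0 ∧ 2 ≤ x (k - 1)) := fun c =>
    h.not_gt (sq_lt_weylDim_of_zero_last hx hk c.1 c.2)
  have c4 : ¬ (2 ≤ x 0 ∧ 2 ≤ x (k - 2)) := fun c =>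
    h.not_gt (sq_lt_weylDim_of_penultimate hx hk zero_le_one c.1 c.2)
  have c5 : ¬ (2 ≤ x 1 ∧ 2 ≤ x (k - 2)) := fun c =>
    h.not_gt (sq_lt_weylDim_of_penultimate hx hk le_rfl c.1 c.2)
  have c6 : ¬ (2 ≤ x (k - 1) ∧ 2 ≤ x 1) := fun c =>
    h'.not_gt (sq_lt_weylDim_of_penultimate hy hk zero_le_one c.1 (by
      simpa [show k - 1 - (k - 2) = 1 by omega] using c.2))
  have n1 : k - 1 ≠ 0 := by omega
  have n2 : k - 1 ≠ 1 := by omega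
  have n3 : k - 2 ≠ 0 := by omega
  have n4 : k - 2 ≠ 1 := by omega
  have n5 : k - 1 ≠ k - 2 := by omega
  rcases end_entries_cases (hx 0) a0 (hx 1) a1 (hx (k - 1)) b0 (hx (k - 2)) b1 c1 c2 c3 c4 c5 c6
    with g | g | g | g | g | g | g
  · refine ⟨(0, 0), by simp, eq_ite_of_ends hk mid (by omega) ?_ ?_ ?_ ?_⟩ <;>
      simp [g, n1, n3]
  · refine ⟨(0, 1), by simp, eq_ite_of_ends hk mid (by omega) ?_ ?_ ?_ ?_⟩ <;>
      simp [g, n1, n3]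
  · refine ⟨(0, 2), by simp, eq_ite_of_ends hk mid (by omega) ?_ ?_ ?_ ?_⟩ <;>
      simp [g, n1, n3]
  · refine ⟨(1, 1), by simp, eq_ite_of_ends hk mid (by omega) ?_ ?_ ?_ ?_⟩ <;>
      simp [g, n2, n4]
  · refine ⟨(k - 1, 1), by simp, eq_ite_of_ends hk mid (by omega) ?_ ?_ ?_ ?_⟩ <;>
      simp [g, n1.symm, n2.symm, n5.symm]
  · refine ⟨(k - 1, 2), by simp, eq_ite_of_ends hk mid (by omega) ?_ ?_ ?_ ?_⟩ <;>
      simp [g, n1.symm, n2.symm, n5.symm]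
  · refine ⟨(k - 2, 1), by simp, eq_ite_of_ends hk mid (by omega) ?_ ?_ ?_ ?_⟩ <;>
      simp [g, n3.symm, n4.symm, n5]

end Bounds

/-- The tuple with entry `w.2 + 1` at position `w.1` and ones elsewhere. -/
def weightTuple (k : ℕ) (w : ℕ × ℕ) : Fin k → ℕ := fun i => if i.val = w.1 then w.2 + 1 else 1

lemma exists_eq_weightTuple {k N : ℕ} (hk7 : 7 ≤ k) (hk : N ≤ k ^ 2) {a : Fin k → ℕ}
    (ha : ∀ i, 1 ≤ a i) (hN : PA k a ≤ N) :
    ∃ w ∈ [(0, 0), (0, 1), (0, 2), (1, 1), (k - 1, 1), (k - 1, 2), (k - 2, 1)],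
      weightTuple k w = a := by
  have hx : ∀ t, 1 ≤ extendOne a t := fun t => by
    unfold extendOne
    split_ifs
    · exact ha _
    · exact le_rfl
  rw [PA_eq_weylDim] at hN
  obtain ⟨w, hw, h⟩ := exists_weight_of_weylDim_le_sq hx hk7
    (hN.trans (by exact_mod_cast hk))
  refine ⟨w, hw, funext fun i => ?_⟩
  rw [weightTuple, ← h i i.2]
  simp [extendOne]

/-- If `k ≥ 7` and `k² ≥ N ≥ 1`, then at most `7` tuples of `k` positive integers have
`PA ≤ N`, and fewer than `7` of them are nontrivial. -/
theorem pa_long_tuples_le_seven (N k : ℕ) (hN : 0 < N) (hk7 : 7 ≤ k) (hk : N ≤ k ^ 2) :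
    {a : Fin k → ℕ | (∀ i, 1 ≤ a i) ∧ PA k a ≤ (N : ℚ)}.Finite ∧
    {a : Fin k → ℕ | (∀ i, 1 ≤ a i) ∧ PA k a ≤ (N : ℚ)}.ncard ≤ 7 ∧
    {a : Fin k → ℕ | (∀ i, 1 ≤ a i) ∧ (∃ i, 2 ≤ a i) ∧ PA k a ≤ (N : ℚ)}.ncard < 7 := by
  have hsub : {a : Fin k → ℕ | (∀ i, 1 ≤ a i) ∧ PA k a ≤ (N : ℚ)} ⊆
      (([(0, 0), (0, 1), (0, 2), (1, 1), (k - 1, 1), (k - 1, 2), (k - 2, 1)].map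
        (weightTuple k)).toFinset : Set (Fin k → ℕ)) := by
    rintro a ⟨ha, hPA⟩
    rw [Finset.mem_coe, List.mem_toFinset, List.mem_map]
    exact exists_eq_weightTuple hk7 hk ha hPA
  have hsub' : {a : Fin k → ℕ | (∀ i, 1 ≤ a i) ∧ (∃ i, 2 ≤ a i) ∧ PA k a ≤ (N : ℚ)} ⊆
      (([(0, 1), (0, 2), (1, 1), (k - 1, 1), (k - 1, 2), (k - 2, 1)].map
        (weightTuple k)).toFinset : Set (Fin k → ℕ)) := by
    rintro a ⟨ha, ⟨i, hi⟩, hPA⟩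
    rw [Finset.mem_coe, List.mem_toFinset, List.mem_map]
    obtain ⟨w, hw, rfl⟩ := exists_eq_weightTuple hk7 hk ha hPA
    rcases List.mem_cons.1 hw with rfl | hw
    · simp [weightTuple] at hi
    · exact ⟨w, hw, rfl⟩
  refine ⟨(Finset.finite_toSet _).subset hsub, ?_, ?_⟩
  · refine (Set.ncard_le_ncard hsub (Finset.finite_toSet _)).trans ?_
    rw [Set.ncard_coe_finset]
    exact List.toFinset_card_le _
  · refine lt_of_le_of_lt (Set.ncard_le_ncard hsub' (Finset.finite_toSet _)) ?_
    rw [Set.ncard_coe_finset]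
    exact lt_of_le_of_lt (List.toFinset_card_le _) (by simp)
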